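/- arXiv:2509.05912 — 8 statements merged into one kernel-verified Lean document; each statement's English description precedes it below -/
import Mathlib

section
/- For all s, x, y in the octonions 𝕆, one has s·(x·(s·y)) = ((s·x)·s)·y. Equivalently, the left-multiplication operators satisfy L(s)∘L(x)∘L(s) = L((s·x)·s). -/
noncomputable section

/-- The octonions as the Cayley–Dickson double of the quaternions. -/
abbrev Oct : Type := Quaternion ℝ × Quaternion ℝ

namespace Oct

/-- Cayley–Dickson multiplication: (a,b)·(c,d) = (ac − d̄b, da + bc̄). -/
def mul (x y : Oct) : Oct :=
  (x.1 * y.1 - star y.2 * x.2, y.2 * x.1 + x.2 * star y.1)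

/-- The unit 1 = (1,0). -/
def one : Oct := (1, 0)

/-- Octonionic conjugation κ(a,b) = (ā, −b). -/
def conj (x : Oct) : Oct := (star x.1, -x.2)

/-- The squared Euclidean norm ‖(a,b)‖² = ‖a‖² + ‖b‖². -/
def normSq (x : Oct) : ℝ := ‖x.1‖ ^ 2 + ‖x.2‖ ^ 2

/-- Left multiplication L(s) : y ↦ s·y. -/
def L (s : Oct) : Oct → Oct := fun y => mul s y

/-- A linear automorphism of 𝕆 is an isometry if it preserves the Euclidean norm. -/
def IsIsometry (A : Oct ≃ₗ[ℝ] Oct) : Prop := ∀ x, normSq (A x) = normSq x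

/-- A triality triple: ℝ-linear isometric bijections with B(x·y) = (Cx)·(Ay). -/
def IsTriality (A B C : Oct ≃ₗ[ℝ] Oct) : Prop :=
  IsIsometry A ∧ IsIsometry B ∧ IsIsometry C ∧
    ∀ x y : Oct, B (mul x y) = mul (C x) (A y)

/-- Octonionic conjugation κ as an ℝ-linear equivalence. -/
def kappa : Oct ≃ₗ[ℝ] Oct where
  toFun := conj
  invFun := conj
  left_inv := fun x => by simp [conj]
  right_inv := fun x => by simp [conj]
  map_add' := fun x y => by simp [conj, Prod.ext_iff, star_add, neg_add, add_comm]
  map_smul' := fun r x => by simp [conj, Prod.ext_iff]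

/-- D ↦ κ∘D∘κ. -/
def conjOp (D : Oct ≃ₗ[ℝ] Oct) : Oct ≃ₗ[ℝ] Oct := kappa.trans (D.trans kappa)

/-- Triples of ℝ-linear bijections of 𝕆. -/
abbrev Triple := (Oct ≃ₗ[ℝ] Oct) × (Oct ≃ₗ[ℝ] Oct) × (Oct ≃ₗ[ℝ] Oct)

/-- The triality map τ(A,B,C) = (κBκ, κCκ, A). -/
def tauMap (T : Triple) : Triple := (conjOp T.2.1, conjOp T.2.2, T.1)

/-- The outer involution σ(A,B,C) = (B, A, κCκ). -/
def sigmaMap (T : Triple) : Triple := (T.2.1, T.1, conjOp T.2.2)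

/-- The induced map on S⁷ × S⁷: t(x,y) = (ȳ, x·ȳ). -/
def tS (p : Oct × Oct) : Oct × Oct := (conj p.2, mul p.1 (conj p.2))

/-- The swap s(x,y) = (y,x). -/
def swap (p : Oct × Oct) : Oct × Oct := (p.2, p.1)

end Oct

open Oct

/-- L(s)∘L(x)∘L(s) = L((s·x)·s) on the octonions. -/
theorem octonion_L_s_L_x_L_s (s x y : Oct) :
    mul s (mul x (mul s y)) = mul (mul (mul s x) s) y := by
  obtain ⟨a, b⟩ := s; obtain ⟨c, d⟩ := x; obtain ⟨e, f⟩ := y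
  unfold mul
  refine Prod.ext ?_ ?_ <;> ext <;>
    simp only [Quaternion.re_mul, Quaternion.imI_mul, Quaternion.imJ_mul, Quaternion.imK_mul,
      Quaternion.re_sub, Quaternion.imI_sub, Quaternion.imJ_sub, Quaternion.imK_sub,
      Quaternion.re_add, Quaternion.imI_add, Quaternion.imJ_add, Quaternion.imK_add,
      Quaternion.re_star, Quaternion.imI_star, Quaternion.imJ_star, Quaternion.imK_star] <;>
    ring
end
end

section
/- The triality map τ, defined on triples of ℝ-linear isometric bijections of 𝕆 by τ(A,B,C) = (κ∘B∘κ, κ∘C∘κ, A), sends triality triples to triality triples, and has order 3: τ(τ(τ(A,B,C))) = (A,B,C) for every triple (A,B,C). -/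
noncomputable section

open Oct

theorem Oct.aux_normSq (x : Oct) : Oct.normSq x =
    x.1.re ^ 2 + x.1.imI ^ 2 + x.1.imJ ^ 2 + x.1.imK ^ 2 +
    (x.2.re ^ 2 + x.2.imI ^ 2 + x.2.imJ ^ 2 + x.2.imK ^ 2) := by
  unfold Oct.normSq
  rw [pow_two ‖x.1‖, pow_two ‖x.2‖, ← Quaternion.normSq_eq_norm_mul_self,
    ← Quaternion.normSq_eq_norm_mul_self, Quaternion.normSq_def', Quaternion.normSq_def']

theorem Oct.aux_mul_conj (u x : Oct) :
    Oct.mul (Oct.mul u x) (Oct.conj x) = Oct.normSq x • u := by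
  rw [Oct.aux_normSq]
  ext <;> simp [Oct.mul, Oct.conj] <;> ring

theorem Oct.aux_conj_conj (x : Oct) : Oct.conj (Oct.conj x) = x := by
  simp [Oct.conj]

theorem Oct.aux_conj_mul (x y : Oct) :
    Oct.conj (Oct.mul x y) = Oct.mul (Oct.conj y) (Oct.conj x) := by
  ext <;> simp [Oct.mul, Oct.conj] <;> ring

theorem Oct.aux_normSq_conj (x : Oct) : Oct.normSq (Oct.conj x) = Oct.normSq x := by
  simp [Oct.normSq, Oct.conj]

theorem Oct.aux_smul_mul (r : ℝ) (x y : Oct) :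
    Oct.mul (r • x) y = r • Oct.mul x y := by
  ext <;> simp [Oct.mul] <;> ring

theorem Oct.aux_normSq_ne (x : Oct) (hx : x ≠ 0) : Oct.normSq x ≠ 0 := by
  intro h
  apply hx
  unfold Oct.normSq at h
  have h1 : ‖x.1‖ = 0 := by nlinarith [sq_nonneg ‖x.1‖, sq_nonneg ‖x.2‖]
  have h2 : ‖x.2‖ = 0 := by nlinarith [sq_nonneg ‖x.1‖, sq_nonneg ‖x.2‖]
  exact Prod.ext (norm_eq_zero.1 h1) (norm_eq_zero.1 h2)

theorem Oct.aux_conjOp (D : Oct ≃ₗ[ℝ] Oct) (x : Oct) :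
    Oct.conjOp D x = Oct.conj (D (Oct.conj x)) := rfl

theorem Oct.aux_iso (D : Oct ≃ₗ[ℝ] Oct) (h : Oct.IsIsometry D) :
    Oct.IsIsometry (Oct.conjOp D) := by
  intro x
  rw [Oct.aux_conjOp, Oct.aux_normSq_conj, h, Oct.aux_normSq_conj]

theorem Oct.aux_conjOp_conjOp (D : Oct ≃ₗ[ℝ] Oct) : Oct.conjOp (Oct.conjOp D) = D := by
  apply LinearEquiv.ext
  intro x
  simp only [Oct.aux_conjOp, Oct.aux_conj_conj]

theorem Oct.aux_key (A B C : Oct ≃ₗ[ℝ] Oct) (h : Oct.IsTriality A B C) (u x : Oct) :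
    C (Oct.mul u (Oct.conj x)) = Oct.mul (B u) (Oct.conj (A x)) := by
  obtain ⟨hA, -, -, hm⟩ := h
  by_cases hx : x = 0
  · subst hx
    have h0 : ∀ v : Oct, Oct.mul v (Oct.conj 0) = 0 := by
      intro v; simp [Oct.mul, Oct.conj]
    rw [map_zero, h0, h0, map_zero]
  · have h1 := Oct.aux_mul_conj u (Oct.conj x)
    rw [Oct.aux_conj_conj, Oct.aux_normSq_conj] at h1
    have h2 := hm (Oct.mul u (Oct.conj x)) x
    rw [h1, map_smul] at h2
    have h3 := congrArg (fun z => Oct.mul z (Oct.conj (A x))) h2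
    simp only [Oct.aux_smul_mul, Oct.aux_mul_conj, hA x] at h3
    exact (smul_right_injective Oct (Oct.aux_normSq_ne x hx) h3).symm

/-- the triality map τ(A,B,C) = (κBκ, κCκ, A) sends triality triples to
triality triples and has order 3 on all triples. -/
theorem tau_triality_and_order_three :
    (∀ A B C : Oct ≃ₗ[ℝ] Oct, IsTriality A B C →
      IsTriality (tauMap (A, B, C)).1 (tauMap (A, B, C)).2.1 (tauMap (A, B, C)).2.2)
    ∧ (∀ T : Triple, tauMap (tauMap (tauMap T)) = T) := by
  constructor
  · intro A B C h
    refine ⟨Oct.aux_iso B h.2.1, Oct.aux_iso C h.2.2.1, h.1, ?_⟩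
    intro x y
    change Oct.conjOp C (Oct.mul x y) = Oct.mul (A x) (Oct.conjOp B y)
    rw [Oct.aux_conjOp, Oct.aux_conjOp, Oct.aux_conj_mul, Oct.aux_key A B C h,
      Oct.aux_conj_mul, Oct.aux_conj_conj]
  · rintro ⟨A, B, C⟩
    simp only [Oct.tauMap, Oct.aux_conjOp_conjOp]
end
end

section
/- The map σ, defined on triples of ℝ-linear isometric bijections of 𝕆 by σ(A,B,C) = (B, A, κ∘C∘κ), sends triality triples to triality triples: if B(x·y) = (C x)·(A y) for all x, y ∈ 𝕆, then A(x·y) = ((κ∘C∘κ)(x))·(B y) for all x, y ∈ 𝕆. -/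
noncomputable section

open Oct

theorem Oct.normSq_conj (x : Oct) : normSq (conj x) = normSq x := by
  simp [normSq, conj]

theorem Oct.conj_conj (x : Oct) : conj (conj x) = x := by
  simp [conj]

theorem Oct.conj_mul_mul (x y : Oct) : mul (conj x) (mul x y) = normSq x • y := by
  obtain ⟨a, b⟩ := x
  obtain ⟨c, d⟩ := y
  have hn : normSq (a, b) = Quaternion.normSq a + Quaternion.normSq b := by
    simp only [normSq, pow_two, Quaternion.normSq_eq_norm_mul_self]
  rw [hn, Quaternion.normSq_def', Quaternion.normSq_def']
  refine Prod.ext ?_ ?_ <;> apply Quaternion.ext <;>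
    simp [mul, conj] <;> ring

theorem Oct.mul_smul_right (r : ℝ) (x y : Oct) : mul x (r • y) = r • mul x y := by
  simp [mul, smul_sub, smul_add]

theorem Oct.normSq_eq_zero {x : Oct} (h : normSq x = 0) : x = 0 := by
  unfold normSq at h
  have h1 : ‖x.1‖ = 0 := by nlinarith [sq_nonneg ‖x.1‖, sq_nonneg ‖x.2‖]
  have h2 : ‖x.2‖ = 0 := by nlinarith [sq_nonneg ‖x.1‖, sq_nonneg ‖x.2‖]
  exact Prod.ext (norm_eq_zero.1 h1) (norm_eq_zero.1 h2)

/-- the map σ(A,B,C) = (B, A, κCκ) sends triality triples to triality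
triples: if B(x·y) = (Cx)·(Ay) for all x,y, then A(x·y) = ((κCκ)x)·(By) for all x,y. -/
theorem sigma_preserves_triality (A B C : Oct ≃ₗ[ℝ] Oct)
    (h : IsTriality A B C) :
    IsTriality (sigmaMap (A, B, C)).1 (sigmaMap (A, B, C)).2.1 (sigmaMap (A, B, C)).2.2 := by
  obtain ⟨hA, hB, hC, h⟩ := h
  refine ⟨hB, hA, ?_, ?_⟩
  · intro x
    change normSq (conj (C (conj x))) = normSq x
    rw [normSq_conj, hC, normSq_conj]
  · intro x y
    change A (mul x y) = mul (conj (C (conj x))) (B y)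
    have e := h (conj x) (mul x y)
    rw [conj_mul_mul, map_smul] at e
    have e2 := congrArg (mul (conj (C (conj x)))) e
    rw [conj_mul_mul, hC, normSq_conj, Oct.mul_smul_right] at e2
    by_cases hx : normSq x = 0
    · have hx0 := normSq_eq_zero hx
      subst hx0
      have h1 : conj (0 : Oct) = 0 := by simp [conj]
      have h2 : ∀ z : Oct, mul 0 z = 0 := by intro z; simp [mul]
      rw [h2, h1, map_zero, map_zero, h1, h2]
    · exact (smul_right_injective Oct hx e2).symm
end
end

section
/- A triality triple (A,B,C) is fixed by the triality map τ (i.e., κ∘B∘κ = A, κ∘C∘κ = B, and A = C) if and only if A = B = C, which in turn holds if and only if A is an algebra automorphism of 𝕆, i.e., A(x·y) = A(x)·A(y) for all x, y ∈ 𝕆 (and B = C = A). -/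
noncomputable section

open Oct

theorem oct_one_mul (x : Oct) : mul one x = x := by
  simp [mul, one]

theorem oct_mul_one (x : Oct) : mul x one = x := by
  simp [mul, one]

theorem oct_one_re : (one.1).re = 1 := rfl
theorem oct_one_imI : (one.1).imI = 0 := rfl
theorem oct_one_imJ : (one.1).imJ = 0 := rfl
theorem oct_one_imK : (one.1).imK = 0 := rfl
theorem oct_one_snd : one.2 = 0 := rfl

theorem oct_conj_eq (x : Oct) : conj x = (2 * x.1.re) • one - x := by
  refine Prod.ext ?_ ?_
  · ext <;> simp [conj, oct_one_re, oct_one_imI, oct_one_imJ, oct_one_imK, oct_one_snd]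
    ring
  · simp [conj, oct_one_snd]

theorem oct_normSq_add_one (x : Oct) : normSq (x + one) = normSq x + 1 + 2 * x.1.re := by
  simp only [normSq, oct_one_snd, Prod.fst_add, Prod.snd_add, add_zero, pow_two,
    ← Quaternion.normSq_eq_norm_mul_self, Quaternion.normSq_def']
  simp [oct_one_re, oct_one_imI, oct_one_imJ, oct_one_imK, oct_one_snd]
  ring

theorem oct_central (u : Oct) (h : ∀ x, mul u x = mul x u) : u = u.1.re • one := by
  have h1 := h (0, 1)
  obtain ⟨c, c0, c1, c2, c3⟩ : ∃ c : Quaternion ℝ, c.re = 0 ∧ c.imI = 1 ∧ c.imJ = 0 ∧ c.imK = 0 :=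
    ⟨⟨0, 1, 0, 0⟩, rfl, rfl, rfl, rfl⟩
  have h2 := h (c, 0)
  obtain ⟨a, b⟩ := u
  simp only [mul, Prod.mk.injEq] at h1 h2
  obtain ⟨h1, h1'⟩ := h1
  obtain ⟨-, h2⟩ := h2
  simp [Quaternion.ext_iff] at h1 h1'
  simp only [mul_zero, zero_mul, zero_add, add_zero, mul_eq_mul_left_iff] at h2
  obtain ⟨h11, h12, h13⟩ := h1
  obtain ⟨h21, h22, h23⟩ := h1'
  refine Prod.ext ?_ ?_
  · ext <;> simp [oct_one_re, oct_one_imI, oct_one_imJ, oct_one_imK, oct_one_snd] <;> linarith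
  · have hz : b = 0 := by
      rcases h2 with h2 | h2
      · have h3 := congrArg (fun q : Quaternion ℝ => q.imI) h2
        simp only [Quaternion.imI_star, c1] at h3
        norm_num at h3
      · exact h2
    simp [hz, oct_one_snd]

theorem oct_re_pres (A : Oct ≃ₗ[ℝ] Oct) (hA : IsIsometry A) (h1 : A one = one) (x : Oct) :
    (A x).1.re = x.1.re := by
  have h := hA (x + one)
  rw [map_add, h1, oct_normSq_add_one, oct_normSq_add_one, hA x] at h
  linarith

theorem oct_conjOp_eq (A : Oct ≃ₗ[ℝ] Oct) (hA : IsIsometry A) (h1 : A one = one) :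
    conjOp A = A := by
  refine LinearEquiv.ext fun x => ?_
  change conj (A (conj x)) = A x
  rw [oct_conj_eq (A (conj x)), oct_re_pres A hA h1, oct_conj_eq x, map_sub, map_smul, h1]
  have : ((2 * x.1.re) • one - x).1.re = x.1.re := by
    simp [oct_one_re]; ring
  rw [this]
  abel

/-- a triality triple (A,B,C) is fixed by τ iff A = B = C, iff A is an
algebra automorphism of 𝕆 (and B = C = A). -/
theorem tau_fixed_iff_automorphism (A B C : Oct ≃ₗ[ℝ] Oct)
    (h : IsTriality A B C) :
    (tauMap (A, B, C) = (A, B, C) ↔ (B = A ∧ C = A))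
    ∧ ((B = A ∧ C = A) ↔
        ((∀ x y : Oct, A (mul x y) = mul (A x) (A y)) ∧ B = A ∧ C = A)) := by
  obtain ⟨hA, -, -, hm⟩ := h
  refine ⟨⟨fun ht => ?_, ?_⟩, ⟨?_, fun h => h.2⟩⟩
  · simp only [tauMap, Prod.mk.injEq] at ht
    obtain ⟨-, hCB, hAC⟩ := ht
    subst hAC
    refine ⟨?_, rfl⟩
    have hl : ∀ y, B y = mul (A one) (A y) := fun y => by
      rw [← hm, oct_one_mul]
    have hr : ∀ y, B y = mul (A y) (A one) := fun y => by
      rw [← hm, oct_mul_one]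
    have hu := oct_central (A one) (fun x => by
      obtain ⟨y, rfl⟩ := A.surjective x
      rw [← hl, ← hr])
    set r := (A one).1.re with hrdef
    have hr0 : r ≠ 0 := by
      intro h0
      rw [h0, zero_smul] at hu
      have : one = 0 := A.map_eq_zero_iff.mp hu
      simp [one] at this
    have hB1 : B one = conj (A (conj one)) := by rw [← hCB]; rfl
    have hc : conj one = one := by simp [conj, one]
    rw [hc, hl, hu] at hB1
    have hre := congrArg (fun z : Oct => z.1.re) hB1
    simp [mul, conj, oct_one_re, oct_one_imI, oct_one_imJ, oct_one_imK, oct_one_snd] at hre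
    have hr1 : r = 1 := by
      have : r * (r - 1) = 0 := by linarith
      rcases mul_eq_zero.mp this with h | h
      · exact absurd h hr0
      · linarith
    rw [hr1, one_smul] at hu
    refine LinearEquiv.ext fun y => ?_
    rw [hl, hu, oct_one_mul]
  · rintro ⟨rfl, rfl⟩
    have h1 : C one = one := by
      obtain ⟨y, hy⟩ := C.surjective one
      have := hm one y
      rw [oct_one_mul, hy, oct_mul_one] at this
      exact this.symm
    simp only [tauMap, oct_conjOp_eq C hA h1]
  · rintro ⟨rfl, rfl⟩
    exact ⟨hm, rfl, rfl⟩
end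
end

section
/- If (A,B,C) is a triality triple with A(1) = 1 and B(1) = 1, then A = B = C and A is an algebra automorphism of 𝕆: A(x·y) = A(x)·A(y) for all x, y ∈ 𝕆. (This identifies the isotropy group at (1,1) of the action of Spin₈ on S⁷ × S⁷ with G₂ = Aut(𝕆).) -/
noncomputable section

open Oct

/-- a triality triple with A(1) = B(1) = 1 has A = B = C and A an algebra
automorphism of 𝕆 (isotropy group of Spin₈ at (1,1) is G₂ = Aut(𝕆)). -/
theorem isotropy_is_G2 (A B C : Oct ≃ₗ[ℝ] Oct) (h : IsTriality A B C)
    (hA : A one = one) (hB : B one = one) :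
    B = A ∧ C = A ∧ ∀ x y : Oct, A (mul x y) = mul (A x) (A y) := by
  obtain ⟨-, -, -, ht⟩ := h
  have h1 : ∀ x : Oct, mul x one = x := fun x => by simp [mul, one]
  have h2 : ∀ x : Oct, mul one x = x := fun x => by simp [mul, one]
  have hBC : ∀ x, B x = C x := fun x => by
    have := ht x one
    rwa [hA, h1, h1] at this
  have hBA : ∀ x, B x = A x := fun x => by
    have := ht one x
    rwa [← hBC, hB, h2, h2] at this
  refine ⟨LinearEquiv.ext hBA, LinearEquiv.ext fun x => by rw [← hBC, hBA], fun x y => ?_⟩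
  rw [← hBA, ht, ← hBC, hBA]
end
end

section
/- Let (A,B,C) be a triality triple and set x = A(1), y = B(1). Then C(1)·x = y, and the triple τ(A,B,C) = (κ∘B∘κ, κ∘C∘κ, A) satisfies (κ∘B∘κ)(1) = ȳ and (κ∘C∘κ)(1) = x·ȳ. Hence on S⁷ × S⁷ the triality automorphism induces the map τ(x,y) = (ȳ, x·ȳ). -/
noncomputable section

open Oct

theorem mul_conj_mul_aux (x z : Oct) :
    mul x (conj (mul z x)) = normSq x • conj z := by
  obtain ⟨a, b⟩ := x
  obtain ⟨c, d⟩ := z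
  have ha : ‖a‖ ^ 2 = a.re ^ 2 + a.imI ^ 2 + a.imJ ^ 2 + a.imK ^ 2 := by
    rw [← Quaternion.normSq_def', Quaternion.normSq_eq_norm_mul_self, sq]
  have hb : ‖b‖ ^ 2 = b.re ^ 2 + b.imI ^ 2 + b.imJ ^ 2 + b.imK ^ 2 := by
    rw [← Quaternion.normSq_def', Quaternion.normSq_eq_norm_mul_self, sq]
  simp only [mul, conj, normSq, ha, hb]
  refine Prod.ext ?_ ?_ <;> ext <;> simp <;> ring

/-- for a triality triple, C(1)·A(1) = B(1) and τ(A,B,C) satisfies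
(κBκ)(1) = B(1)‾ and (κCκ)(1) = A(1)·B(1)‾, i.e. τ induces (x,y) ↦ (ȳ, x·ȳ). -/
theorem tau_on_sphere (A B C : Oct ≃ₗ[ℝ] Oct) (h : IsTriality A B C) :
    mul (C one) (A one) = B one
    ∧ (conjOp B) one = conj (B one)
    ∧ (conjOp C) one = mul (A one) (conj (B one)) := by
  obtain ⟨hA, -, -, hm⟩ := h
  have h1 : mul (C one) (A one) = B one := by
    rw [← hm]
    congr 1
    simp [mul, one]
  have hk : conj one = one := by simp [conj, one]
  have hn : normSq (A one) = 1 := by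
    rw [hA]
    simp [normSq, one]
  refine ⟨h1, ?_, ?_⟩
  · change conj (B (conj one)) = _
    rw [hk]
  · change conj (C (conj one)) = _
    rw [hk, ← h1, mul_conj_mul_aux, hn, one_smul]
end
end

section
/- Let t(x,y) = (ȳ, x·ȳ) and let s(x,y) = (y,x) be the swap on 𝕆 × 𝕆. For all x, y ∈ 𝕆 with ‖x‖ = ‖y‖ = 1, one has s(t(s(x,y))) = t(t(x,y)); that is, conjugating t by the swap gives t⁻¹ = t² on S⁷ × S⁷, so s and t generate an action of the symmetric group S₃. -/
noncomputable section

open Oct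

/-- conjugating t by the swap gives t² on S⁷ × S⁷:
s(t(s(x,y))) = t(t(x,y)) for unit x, y; so s and t generate an S₃-action. -/
theorem swap_t_swap_eq_t_sq (x y : Oct) (hx : normSq x = 1) (hy : normSq y = 1) :
    swap (tS (swap (x, y))) = tS (tS (x, y)) := by
  obtain ⟨a, b⟩ := x
  obtain ⟨c, d⟩ := y
  have h : c.re ^ 2 + c.imI ^ 2 + c.imJ ^ 2 + c.imK ^ 2 +
      (d.re ^ 2 + d.imI ^ 2 + d.imJ ^ 2 + d.imK ^ 2) = 1 := by
    have h1 := Quaternion.normSq_eq_norm_mul_self c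
    have h2 := Quaternion.normSq_eq_norm_mul_self d
    rw [Quaternion.normSq_def'] at h1 h2
    simp only [Oct.normSq] at hy
    rw [h1, h2]
    linarith [hy]
  clear hx hy
  simp only [Oct.swap, Oct.tS, Oct.mul, Oct.conj]
  refine Prod.ext (Prod.ext ?_ ?_) (Prod.ext ?_ ?_)
  · simp
  · simp
  · ext <;> simp
    · linear_combination (-a.re) * h
    · linear_combination (a.imI) * h
    · linear_combination (a.imJ) * h
    · linear_combination (a.imK) * h
  · ext <;> simp
    · linear_combination (b.re) * h
    · linear_combination (b.imI) * h
    · linear_combination (b.imJ) * h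
    · linear_combination (b.imK) * h
end
end

section
/- Let s, t ∈ 𝕆 with ‖s‖ = ‖t‖ = 1, s·(s·s) = 1, t·(t·t) = 1, and s ≠ 1. If s·t = t·s, then t ∈ {1, s, s̄}. (Equivalently: a cube root of unity in 𝕆 commuting with a nontrivial cube root of unity s must lie in {1, s, s²}.) -/
noncomputable section

open Oct

lemma oct_ext (x y : Oct) (h0 : x.1.re = y.1.re) (h1 : x.1.imI = y.1.imI) (h2 : x.1.imJ = y.1.imJ)
    (h3 : x.1.imK = y.1.imK) (h4 : x.2.re = y.2.re) (h5 : x.2.imI = y.2.imI)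
    (h6 : x.2.imJ = y.2.imJ) (h7 : x.2.imK = y.2.imK) : x = y :=
  Prod.ext (Quaternion.ext _ _ h0 h1 h2 h3) (Quaternion.ext _ _ h4 h5 h6 h7)

lemma oct_ext_conj (x y : Oct) (h0 : x.1.re = y.1.re) (h1 : x.1.imI = -y.1.imI)
    (h2 : x.1.imJ = -y.1.imJ) (h3 : x.1.imK = -y.1.imK) (h4 : x.2.re = -y.2.re)
    (h5 : x.2.imI = -y.2.imI) (h6 : x.2.imJ = -y.2.imJ) (h7 : x.2.imK = -y.2.imK) :
    x = Oct.conj y := by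
  apply oct_ext <;> simp [Oct.conj, *]

lemma sum_sq_zero (a b c d e f g : ℝ) (h : a^2+b^2+c^2+d^2+e^2+f^2+g^2 = 0) :
    a = 0 ∧ b = 0 ∧ c = 0 ∧ d = 0 ∧ e = 0 ∧ f = 0 ∧ g = 0 := by
  have := sq_nonneg a
  have := sq_nonneg b
  have := sq_nonneg c
  have := sq_nonneg d
  have := sq_nonneg e
  have := sq_nonneg f
  have := sq_nonneg g
  refine ⟨?_, ?_, ?_, ?_, ?_, ?_, ?_⟩ <;> (apply pow_eq_zero_iff (two_ne_zero) |>.1; linarith)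

lemma normSq_coord (x : Oct) (h : Oct.normSq x = 1) :
    x.1.re^2 + x.1.imI^2 + x.1.imJ^2 + x.1.imK^2 + x.2.re^2 + x.2.imI^2 + x.2.imJ^2
      + x.2.imK^2 = 1 := by
  unfold Oct.normSq at h
  rw [sq, sq, ← Quaternion.normSq_eq_norm_mul_self, ← Quaternion.normSq_eq_norm_mul_self,
    Quaternion.normSq_def', Quaternion.normSq_def'] at h
  linarith

lemma cube_root_re (x : Oct) (h : Oct.normSq x = 1) (h3 : Oct.mul x (Oct.mul x x) = Oct.one) :
    x = Oct.one ∨ x.1.re = -1/2 := by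
  have hn := normSq_coord x h
  have hr : (Oct.mul x (Oct.mul x x)).1.re = 1 := by rw [h3]; rfl
  simp [Oct.mul] at hr
  have hp : (x.1.re - 1) * (2 * x.1.re + 1)^2 = 0 := by
    linear_combination hr + 3 * x.1.re * hn
  rcases mul_eq_zero.1 hp with h1 | h1
  · left
    have h1 : x.1.re = 1 := by linarith
    rw [h1] at hn
    obtain ⟨a, b, c, d, e, f, g⟩ := sum_sq_zero x.1.imI x.1.imJ x.1.imK x.2.re x.2.imI x.2.imJ
      x.2.imK (by linarith)
    exact oct_ext _ _ h1 a b c d e f g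
  · right
    have := (pow_eq_zero_iff two_ne_zero).1 h1
    linarith

/-- a unit cube root of unity t commuting with a nontrivial unit cube
root of unity s lies in {1, s, s̄}. -/
theorem commuting_cube_roots (s t : Oct) (hs : normSq s = 1) (ht : normSq t = 1)
    (hs3 : mul s (mul s s) = one) (ht3 : mul t (mul t t) = one)
    (hs1 : s ≠ one) (hcomm : mul s t = mul t s) :
    t = one ∨ t = s ∨ t = conj s := by
  rcases cube_root_re s hs hs3 with h | hsr
  · exact absurd h hs1
  rcases cube_root_re t ht ht3 with h | htr
  · exact Or.inl h
  right
  have ns := normSq_coord s hs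
  have nt := normSq_coord t ht
  have c1 := congrArg (fun x : Oct => x.1.imI) hcomm
  have c2 := congrArg (fun x : Oct => x.1.imJ) hcomm
  have c3 := congrArg (fun x : Oct => x.1.imK) hcomm
  have c4 := congrArg (fun x : Oct => x.2.re) hcomm
  have c5 := congrArg (fun x : Oct => x.2.imI) hcomm
  have c6 := congrArg (fun x : Oct => x.2.imJ) hcomm
  have c7 := congrArg (fun x : Oct => x.2.imK) hcomm
  simp [Oct.mul] at c1 c2 c3 c4 c5 c6 c7
  obtain ⟨⟨a0, a1, a2, a3⟩, ⟨a4, a5, a6, a7⟩⟩ := s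
  obtain ⟨⟨b0, b1, b2, b3⟩, ⟨b4, b5, b6, b7⟩⟩ := t
  simp only at *
  subst hsr htr
  have key : 4 * ((a1^2+a2^2+a3^2+a4^2+a5^2+a6^2+a7^2) * (b1^2+b2^2+b3^2+b4^2+b5^2+b6^2+b7^2)
     - (a1*b1+a2*b2+a3*b3+a4*b4+a5*b5+a6*b6+a7*b7)^2) = 0 := by
    rw [← sub_eq_zero] at c1 c2 c3 c4 c5 c6 c7
    have q : ∀ {x : ℝ}, x = 0 → x^2 = 0 := by intro x h; simp [h]
    linear_combination q c1 + q c2 + q c3 + q c4 + q c5 + q c6 + q c7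
  have na : a1^2+a2^2+a3^2+a4^2+a5^2+a6^2+a7^2 = 3/4 := by linarith
  have nb : b1^2+b2^2+b3^2+b4^2+b5^2+b6^2+b7^2 = 3/4 := by linarith
  rw [na, nb] at key
  have hd : (a1*b1+a2*b2+a3*b3+a4*b4+a5*b5+a6*b6+a7*b7 - 3/4) *
      (a1*b1+a2*b2+a3*b3+a4*b4+a5*b5+a6*b6+a7*b7 + 3/4) = 0 := by linear_combination -key/4
  rcases mul_eq_zero.1 hd with h | h
  · left
    obtain ⟨h1, h2, h3, h4, h5, h6, h7⟩ := sum_sq_zero (b1-a1) (b2-a2) (b3-a3) (b4-a4) (b5-a5)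
      (b6-a6) (b7-a7) (by linear_combination na + nb - 2 * h)
    exact oct_ext _ _ rfl (sub_eq_zero.1 h1) (sub_eq_zero.1 h2) (sub_eq_zero.1 h3) (sub_eq_zero.1 h4) (sub_eq_zero.1 h5) (sub_eq_zero.1 h6) (sub_eq_zero.1 h7)
  · right
    obtain ⟨h1, h2, h3, h4, h5, h6, h7⟩ := sum_sq_zero (b1+a1) (b2+a2) (b3+a3) (b4+a4) (b5+a5)
      (b6+a6) (b7+a7) (by linear_combination na + nb + 2 * h)
    exact oct_ext_conj _ _ rfl (eq_neg_of_add_eq_zero_left h1) (eq_neg_of_add_eq_zero_left h2) (eq_neg_of_add_eq_zero_left h3) (eq_neg_of_add_eq_zero_left h4) (eq_neg_of_add_eq_zero_left h5) (eq_neg_of_add_eq_zero_left h6) (eq_neg_of_add_eq_zero_left h7)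
end
end
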